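/- arXiv:2402.17654 — 4 statements merged into one kernel-verified Lean document; each statement's English description precedes it below -/
import Mathlib

section
/- Let n ≥ 1 and 1 ≤ r ≤ n. If w ∈ K(r,n) and the value n occurs at a position at most r in the one-line notation of w (i.e., w⁻¹(n) ≤ r), then φₙ(w) ∈ K(r−1, n−1). -/
/-!
Positions are counted from `0`. Deleting the top value at position `p` replaces position `k` by `p.succAbove k` and leaves
the values unchanged, which is `phiMap_castSucc`. The map `p.succAbove` is strictly monotone, and
since `p ≤ r - 1` it sends positions below `r - 1` to positions below `r` and positions at least
`r - 1` to positions at least `r`. So a split pattern of `phiMap w` with respect to `r - 1` is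
carried to the same split pattern of `w` with respect to `r`.
-/

open scoped Classical

/-- `w` contains the split pattern `3|12` with respect to position `r`.
Positions and values are 1-indexed in the paper; here `i : Fin n` represents
position `(i : ℕ) + 1` and the value at position `i` is `(w i : ℕ) + 1`.
The condition `i₁ ≤ r < i₂` (1-indexed) becomes `(i₁ : ℕ) < r ∧ r ≤ (i₂ : ℕ)`. -/
def Contains312 (n r : ℕ) (w : Equiv.Perm (Fin n)) : Prop :=
  ∃ i₁ i₂ i₃ : Fin n, i₁ < i₂ ∧ i₂ < i₃ ∧ (i₁ : ℕ) < r ∧ r ≤ (i₂ : ℕ) ∧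
    w i₂ < w i₃ ∧ w i₃ < w i₁

/-- `w` contains the split pattern `23|1` with respect to position `r`. -/
def Contains231 (n r : ℕ) (w : Equiv.Perm (Fin n)) : Prop :=
  ∃ i₁ i₂ i₃ : Fin n, i₁ < i₂ ∧ i₂ < i₃ ∧ (i₂ : ℕ) < r ∧ r ≤ (i₃ : ℕ) ∧
    w i₃ < w i₁ ∧ w i₁ < w i₂

/-- `K(r,n)`: the permutations of `{1,…,n}` that avoid both split patterns
`3|12` and `23|1` with respect to position `r`. -/
noncomputable def splitK (r n : ℕ) : Finset (Equiv.Perm (Fin n)) :=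
  Finset.univ.filter fun w => ¬ Contains312 n r w ∧ ¬ Contains231 n r w

/-- `k(r,n) = |K(r,n)|`. -/
noncomputable def splitk (r n : ℕ) : ℕ := (splitK r n).card

/-- `K_L(r,n)`: those `w ∈ K(r,n)` for which the value `n` occurs among the
first `r` positions of the one-line notation. -/
noncomputable def splitKL (r n : ℕ) : Finset (Equiv.Perm (Fin n)) :=
  (splitK r n).filter fun w => ∃ p : Fin n, (p : ℕ) < r ∧ (w p : ℕ) + 1 = n

/-- `K_R(r,n)`: those `w ∈ K(r,n)` for which the value `n` occurs among the
last `n - r` positions of the one-line notation. -/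
noncomputable def splitKR (r n : ℕ) : Finset (Equiv.Perm (Fin n)) :=
  (splitK r n).filter fun w => ∃ p : Fin n, r ≤ (p : ℕ) ∧ (w p : ℕ) + 1 = n

/-- `φₙ`: delete the top value `n+1` from the one-line notation of
`w ∈ S_{n+1}`.  If `p = w⁻¹(top)`, then `(phiMap w) k = w k` for `k < p` and
`(phiMap w) k = w (k+1)` for `k ≥ p` (values cast down past the removed top value). -/
def phiMap {n : ℕ} (w : Equiv.Perm (Fin (n + 1))) : Equiv.Perm (Fin n) :=
  Equiv.removeNone
    ((finSuccEquiv' (w.symm (Fin.last n))).symm.trans (w.trans (finSuccEquiv' (Fin.last n))))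

/-- `a(r,s) = k(r, r+s)/(r!·s!) - 1` as a rational number. -/
noncomputable def aRat (r s : ℕ) : ℚ :=
  (splitk r (r + s) : ℚ) / ((Nat.factorial r : ℚ) * (Nat.factorial s : ℚ)) - 1

/-- One-line notation of `phiMap w`: its `k`-th entry is the entry of `w` at the `k`-th position
other than that of the top value. -/
theorem phiMap_castSucc {n : ℕ} (w : Equiv.Perm (Fin (n + 1))) (k : Fin n) :
    (phiMap w k).castSucc = w ((w.symm (Fin.last n)).succAbove k) := by
  set p := w.symm (Fin.last n) with hp
  have hne : w (p.succAbove k) ≠ Fin.last n := fun h =>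
    Fin.succAbove_ne p k ((Equiv.eq_symm_apply w).2 h)
  obtain ⟨y, hy⟩ := Fin.exists_castSucc_eq.mpr hne
  have he : ((finSuccEquiv' p).symm.trans (w.trans (finSuccEquiv' (Fin.last n)))) (some k)
      = some y := by
    simp [← hy]
  have h := Equiv.removeNone_some _ ⟨y, he⟩
  rw [he, Option.some_inj] at h
  rw [← hy, ← h]
  rfl

theorem phiMap_lt_iff {n : ℕ} (w : Equiv.Perm (Fin (n + 1))) (i j : Fin n) :
    phiMap w i < phiMap w j ↔
      w ((w.symm (Fin.last n)).succAbove i) < w ((w.symm (Fin.last n)).succAbove j) := by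
  rw [← phiMap_castSucc, ← phiMap_castSucc, Fin.castSucc_lt_castSucc_iff]

theorem succAbove_val_lt {n r : ℕ} (p : Fin (n + 1)) (k : Fin n) (hk : (k : ℕ) < r - 1) :
    (p.succAbove k : ℕ) < r := by
  unfold Fin.succAbove
  split_ifs <;> simp <;> omega

theorem le_succAbove_val {n r : ℕ} (p : Fin (n + 1)) (hp : (p : ℕ) < r) (k : Fin n)
    (hk : r - 1 ≤ (k : ℕ)) : r ≤ (p.succAbove k : ℕ) := by
  rw [Fin.succAbove_of_le_castSucc _ _ (by simp [Fin.le_def]; omega)]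
  simp
  omega

/-- If `w ∈ K(r, n+1)` with `1 ≤ r ≤ n+1` and the value `n+1` occurs at a position
at most `r` (i.e. `w⁻¹(top) ≤ r`, 1-indexed), then `φ(w) ∈ K(r-1, n)`. -/
theorem stmt3 (n r : ℕ) (hr : 1 ≤ r) (hrn : r ≤ n + 1) (w : Equiv.Perm (Fin (n + 1)))
    (hw : w ∈ splitK r (n + 1)) (hpos : (w.symm (Fin.last n) : ℕ) < r) :
    phiMap w ∈ splitK (r - 1) n := by
  simp only [splitK, Finset.mem_filter, Finset.mem_univ, true_and] at hw ⊢
  have mono := Fin.strictMono_succAbove (w.symm (Fin.last n))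
  refine ⟨fun ⟨i, j, k, hij, hjk, hl, hg, h1, h2⟩ => hw.1 ?_,
    fun ⟨i, j, k, hij, hjk, hl, hg, h1, h2⟩ => hw.2 ?_⟩ <;>
  exact ⟨_, _, _, mono hij, mono hjk, succAbove_val_lt _ _ hl, le_succAbove_val _ hpos _ hg,
    (phiMap_lt_iff w _ _).1 h1, (phiMap_lt_iff w _ _).1 h2⟩
end

section
/- Let n ≥ 1 and 0 ≤ r ≤ n−1. For every w ∈ K(r,n−1), the fiber {u ∈ K_R(r,n) : φₙ(u) = w} has cardinality exactly n−r. -/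
/-! Inserting the top value into `w` at a position `p` gives a permutation `insertTop p w`, and
deletion of the top value undoes this; hence the fiber of `phiMap` over `w` is parametrized by the
position `p` of the top value. When `p` lies to the right of the split, the insertion creates no
new pattern: in both patterns the largest entry sits to the left of the split, so the new top value
could only play one of the smaller entries, which is impossible. The remaining entries keep their
relative order and their side of the split, so avoidance passes from `w` to `insertTop p w`
(`splitKR_insertTop`). Thus every one of the `n + 1 - r` positions `p ≥ r` contributes exactly one
element. -/

open scoped Classical

/-- The permutation obtained from `w` by inserting the new top value at position `p`, the entries
of `w` at positions `≥ p` being shifted one step to the right. -/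
def insertTop {n : ℕ} (p : Fin (n + 1)) (w : Equiv.Perm (Fin n)) : Equiv.Perm (Fin (n + 1)) :=
  (finSuccEquiv' p).trans (w.optionCongr.trans (finSuccEquiv' (Fin.last n)).symm)

lemma insertTop_self {n : ℕ} (p : Fin (n + 1)) (w : Equiv.Perm (Fin n)) :
    insertTop p w p = Fin.last n := by
  simp [insertTop]

lemma insertTop_succAbove {n : ℕ} (p : Fin (n + 1)) (w : Equiv.Perm (Fin n)) (k : Fin n) :
    insertTop p w (p.succAbove k) = (w k).castSucc := by
  simp [insertTop]

lemma insertTop_symm_last {n : ℕ} (p : Fin (n + 1)) (w : Equiv.Perm (Fin n)) :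
    (insertTop p w).symm (Fin.last n) = p := by
  rw [Equiv.symm_apply_eq, insertTop_self]

lemma phiMap_insertTop {n : ℕ} (p : Fin (n + 1)) (w : Equiv.Perm (Fin n)) :
    phiMap (insertTop p w) = w := by
  have h : (finSuccEquiv' p).symm.trans
      ((insertTop p w).trans (finSuccEquiv' (Fin.last n))) = w.optionCongr := by
    ext1 x
    simp [insertTop]
  rw [phiMap, insertTop_symm_last, h, Equiv.removeNone_optionCongr]

/-- A permutation is recovered from its image under `phiMap` and the position of its top value. -/
lemma insertTop_phiMap {n : ℕ} (u : Equiv.Perm (Fin (n + 1))) :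
    insertTop (u.symm (Fin.last n)) (phiMap u) = u := by
  obtain ⟨e, he⟩ : ∃ e, e = (finSuccEquiv' (u.symm (Fin.last n))).symm.trans
      (u.trans (finSuccEquiv' (Fin.last n))) := ⟨_, rfl⟩
  have hnone : e none = none := by simp [he]
  have hcongr : (Equiv.removeNone e).optionCongr = e := by
    ext1 x
    cases x with
    | none => simp [hnone]
    | some k =>
      have hk : e (some k) ≠ none := fun h => by
        simpa using e.injective (h.trans hnone.symm)
      exact Equiv.removeNone_some e (Option.ne_none_iff_exists'.1 hk)
  rw [phiMap, ← he, insertTop, hcongr, he]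
  ext1 x
  simp

/-- Inserting the top value to the right of the split preserves avoidance of both patterns. -/
lemma splitKR_insertTop {n r : ℕ} {w : Equiv.Perm (Fin n)} (hw : w ∈ splitK r n)
    {p : Fin (n + 1)} (hp : r ≤ (p : ℕ)) : insertTop p w ∈ splitKR r (n + 1) := by
  simp only [splitK, Finset.mem_filter, Finset.mem_univ, true_and] at hw
  simp only [splitKR, splitK, Finset.mem_filter, Finset.mem_univ, true_and]
  -- `succAbove` keeps every position on its side of the split, since `r ≤ p`.
  have side (k : Fin n) : ((p.succAbove k : Fin (n + 1)) : ℕ) < r ↔ (k : ℕ) < r := by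
    rcases lt_or_ge k.castSucc p with h | h
    · simp [Fin.succAbove_of_castSucc_lt _ _ h]
    · rw [Fin.succAbove_of_le_castSucc _ _ h]
      simp only [Fin.le_def, Fin.val_castSucc] at h
      simp only [Fin.val_succ]
      omega
  -- An entry exceeded by another one is not the top value, so its position is not `p`.
  have small {i j : Fin (n + 1)} (h : insertTop p w i < insertTop p w j) :
      ∃ k, p.succAbove k = i := by
    refine Fin.exists_succAbove_eq ?_
    rintro rfl
    rw [insertTop_self] at h
    exact absurd h (Fin.le_last _).not_gt
  have left {i : Fin (n + 1)} (h : (i : ℕ) < r) : ∃ k, p.succAbove k = i := by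
    refine Fin.exists_succAbove_eq ?_
    rintro rfl
    omega
  refine ⟨⟨?_, ?_⟩, p, hp, by simp [insertTop_self]⟩
  · rintro ⟨i₁, i₂, i₃, h₁₂, h₂₃, hl, hr, hv, hv'⟩
    obtain ⟨k₁, rfl⟩ := left hl
    obtain ⟨k₂, rfl⟩ := small hv
    obtain ⟨k₃, rfl⟩ := small hv'
    simp only [insertTop_succAbove, Fin.castSucc_lt_castSucc_iff] at hv hv'
    rw [Fin.succAbove_lt_succAbove_iff] at h₁₂ h₂₃
    rw [side] at hl
    rw [← not_lt, side, not_lt] at hr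
    exact hw.1 ⟨k₁, k₂, k₃, h₁₂, h₂₃, hl, hr, hv, hv'⟩
  · rintro ⟨i₁, i₂, i₃, h₁₂, h₂₃, hl, hr, hv, hv'⟩
    obtain ⟨k₁, rfl⟩ := small hv'
    obtain ⟨k₂, rfl⟩ := left hl
    obtain ⟨k₃, rfl⟩ := small hv
    simp only [insertTop_succAbove, Fin.castSucc_lt_castSucc_iff] at hv hv'
    rw [Fin.succAbove_lt_succAbove_iff] at h₁₂ h₂₃
    rw [side] at hl
    rw [← not_lt, side, not_lt] at hr
    exact hw.2 ⟨k₁, k₂, k₃, h₁₂, h₂₃, hl, hr, hv, hv'⟩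

/-- Proposition 2.2 (fiber size): for `0 ≤ r ≤ n` and `w ∈ K(r, n)`, the fiber
`{u ∈ K_R(r, n+1) : φ(u) = w}` has exactly `(n+1) - r` elements. -/
theorem stmt5 (n r : ℕ) (hrn : r ≤ n) (w : Equiv.Perm (Fin n)) (hw : w ∈ splitK r n) :
    ((splitKR r (n + 1)).filter fun u => phiMap u = w).card = n + 1 - r := by
  have hr : r < n + 1 := by omega
  rw [← Fin.card_Ici (⟨r, hr⟩ : Fin (n + 1))]
  symm
  refine Finset.card_bij (fun p _ => insertTop p w) ?_ ?_ ?_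
  · intro p hp
    rw [Finset.mem_Ici, Fin.le_def] at hp
    exact Finset.mem_filter.2 ⟨splitKR_insertTop hw hp, phiMap_insertTop p w⟩
  · intro p _ q _ h
    rw [← insertTop_symm_last p w, h, insertTop_symm_last]
  · intro u hu
    obtain ⟨huR, rfl⟩ := Finset.mem_filter.1 hu
    obtain ⟨p, hp, hup⟩ := (Finset.mem_filter.1 huR).2
    have hlast : u p = Fin.last n := Fin.ext (by simpa using hup)
    refine ⟨u.symm (Fin.last n), ?_, insertTop_phiMap u⟩
    rw [← hlast, Equiv.symm_apply_apply, Finset.mem_Ici]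
    exact hp
end

section
/- Let n ≥ 1 and 0 ≤ r ≤ n−1. Then |K_R(r,n)| = (n−r) · k(r, n−1). -/
/-!
The largest value plays the role of `3` in any occurrence of `3|12` or `23|1` it takes part in,
and in both patterns the `3` sits to the left of the bar. Hence a largest value placed to the
right of the bar takes part in no occurrence, and inserting it there (or deleting it) neither
creates nor destroys one: `insTop_mem_splitK_iff`. As `(p, v) ↦ insTop p v` is a bijection onto
the permutations of one more letter (`insTop_bijective`), `K_R(r, n+1)` corresponds to the pairs
of one of the `n + 1 - r` positions right of the bar and an element of `K(r, n)`.
-/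

open scoped Classical

/-- The permutation obtained from the one-line notation of `v` by inserting a new largest value
at position `p`. -/
def insTop {n : ℕ} (p : Fin (n + 1)) (v : Equiv.Perm (Fin n)) : Equiv.Perm (Fin (n + 1)) :=
  (finSuccEquiv' p).trans ((Equiv.optionCongr v).trans (finSuccEquiv' (Fin.last n)).symm)

theorem insTop_self {n : ℕ} (p : Fin (n + 1)) (v : Equiv.Perm (Fin n)) :
    insTop p v p = Fin.last n := by
  simp [insTop]

theorem insTop_succAbove {n : ℕ} (p : Fin (n + 1)) (v : Equiv.Perm (Fin n)) (k : Fin n) :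
    insTop p v (p.succAbove k) = (v k).castSucc := by
  simp [insTop]

theorem insTop_bijective (n : ℕ) :
    Function.Bijective fun x : Fin (n + 1) × Equiv.Perm (Fin n) => insTop x.1 x.2 := by
  -- Both sides have `(n + 1)!` elements, so injectivity is enough.
  rw [Fintype.bijective_iff_injective_and_card]
  refine ⟨?_, by simp [Fintype.card_perm, Nat.factorial_succ]⟩
  rintro ⟨p, v⟩ ⟨q, u⟩ h
  have h : insTop p v = insTop q u := h
  have hpq : p = q := by
    apply (insTop q u).injective
    rw [insTop_self, ← h, insTop_self]
  subst hpq
  refine Prod.ext rfl (Equiv.ext fun k => ?_)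
  apply Fin.castSucc_injective
  rw [← insTop_succAbove p v, ← insTop_succAbove p u, h]

/-- Inserting at a position right of the bar leaves the positions left of the bar in place. -/
theorem succAbove_val_lt_iff {n r : ℕ} {p : Fin (n + 1)} (hp : r ≤ (p : ℕ)) (k : Fin n) :
    (p.succAbove k : ℕ) < r ↔ (k : ℕ) < r := by
  by_cases h : k.castSucc < p
  · rw [Fin.succAbove_of_castSucc_lt _ _ h, Fin.val_castSucc]
  · rw [Fin.succAbove_of_le_castSucc _ _ (not_lt.mp h), Fin.val_succ]
    have : (p : ℕ) ≤ k := not_lt.mp h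
    omega

theorem insTop_lt_iff {n : ℕ} (p : Fin (n + 1)) (v : Equiv.Perm (Fin n)) (a b : Fin n) :
    insTop p v (p.succAbove a) < insTop p v (p.succAbove b) ↔ v a < v b := by
  rw [insTop_succAbove, insTop_succAbove, Fin.castSucc_lt_castSucc_iff]

/-- A position holding a value smaller than some other value is not the insertion position. -/
theorem exists_succAbove_of_insTop_lt {n : ℕ} {p : Fin (n + 1)} {v : Equiv.Perm (Fin n)}
    {i j : Fin (n + 1)} (h : insTop p v i < insTop p v j) : ∃ a, p.succAbove a = i := by
  apply Fin.exists_succAbove_eq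
  rintro rfl
  rw [insTop_self] at h
  exact absurd h (not_lt.mpr (Fin.le_last _))

/-- A position left of the bar is not the insertion position when the latter is right of it. -/
theorem exists_succAbove_of_lt {n r : ℕ} {p : Fin (n + 1)} (hp : r ≤ (p : ℕ))
    {i : Fin (n + 1)} (h : (i : ℕ) < r) : ∃ a, p.succAbove a = i := by
  apply Fin.exists_succAbove_eq
  rintro rfl
  omega

theorem contains312_insTop_iff {n r : ℕ} {p : Fin (n + 1)} (hp : r ≤ (p : ℕ))
    (v : Equiv.Perm (Fin n)) : Contains312 (n + 1) r (insTop p v) ↔ Contains312 n r v := by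
  constructor
  · rintro ⟨i₁, i₂, i₃, h12, h23, hl, hr, hv, hv'⟩
    obtain ⟨a, rfl⟩ := exists_succAbove_of_lt hp hl
    obtain ⟨b, rfl⟩ := exists_succAbove_of_insTop_lt hv
    obtain ⟨c, rfl⟩ := exists_succAbove_of_insTop_lt hv'
    rw [← not_lt, succAbove_val_lt_iff hp, not_lt] at hr
    exact ⟨a, b, c, Fin.succAbove_lt_succAbove_iff.mp h12, Fin.succAbove_lt_succAbove_iff.mp h23,
      (succAbove_val_lt_iff hp a).mp hl, hr, (insTop_lt_iff ..).mp hv, (insTop_lt_iff ..).mp hv'⟩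
  · rintro ⟨a, b, c, h12, h23, hl, hr, hv, hv'⟩
    rw [← not_lt, ← succAbove_val_lt_iff hp, not_lt] at hr
    exact ⟨_, _, _, Fin.succAbove_lt_succAbove_iff.mpr h12, Fin.succAbove_lt_succAbove_iff.mpr h23,
      (succAbove_val_lt_iff hp a).mpr hl, hr, (insTop_lt_iff ..).mpr hv, (insTop_lt_iff ..).mpr hv'⟩

theorem contains231_insTop_iff {n r : ℕ} {p : Fin (n + 1)} (hp : r ≤ (p : ℕ))
    (v : Equiv.Perm (Fin n)) : Contains231 (n + 1) r (insTop p v) ↔ Contains231 n r v := by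
  constructor
  · rintro ⟨i₁, i₂, i₃, h12, h23, hl, hr, hv, hv'⟩
    obtain ⟨b, rfl⟩ := exists_succAbove_of_lt hp hl
    obtain ⟨c, rfl⟩ := exists_succAbove_of_insTop_lt hv
    obtain ⟨a, rfl⟩ := exists_succAbove_of_insTop_lt hv'
    rw [← not_lt, succAbove_val_lt_iff hp, not_lt] at hr
    exact ⟨a, b, c, Fin.succAbove_lt_succAbove_iff.mp h12, Fin.succAbove_lt_succAbove_iff.mp h23,
      (succAbove_val_lt_iff hp b).mp hl, hr, (insTop_lt_iff ..).mp hv, (insTop_lt_iff ..).mp hv'⟩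
  · rintro ⟨a, b, c, h12, h23, hl, hr, hv, hv'⟩
    rw [← not_lt, ← succAbove_val_lt_iff hp, not_lt] at hr
    exact ⟨_, _, _, Fin.succAbove_lt_succAbove_iff.mpr h12, Fin.succAbove_lt_succAbove_iff.mpr h23,
      (succAbove_val_lt_iff hp b).mpr hl, hr, (insTop_lt_iff ..).mpr hv, (insTop_lt_iff ..).mpr hv'⟩

theorem insTop_mem_splitK_iff {n r : ℕ} {p : Fin (n + 1)} (hp : r ≤ (p : ℕ))
    (v : Equiv.Perm (Fin n)) : insTop p v ∈ splitK r (n + 1) ↔ v ∈ splitK r n := by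
  simp [splitK, contains312_insTop_iff hp, contains231_insTop_iff hp]

theorem insTop_mem_splitKR_iff {n r : ℕ} (p : Fin (n + 1)) (v : Equiv.Perm (Fin n)) :
    insTop p v ∈ splitKR r (n + 1) ↔ r ≤ (p : ℕ) ∧ v ∈ splitK r n := by
  rw [splitKR, Finset.mem_filter]
  constructor
  · rintro ⟨hK, q, hq, hv⟩
    have hqp : q = p := by
      apply (insTop p v).injective
      rw [insTop_self]
      exact Fin.ext (Nat.succ_injective hv)
    subst hqp
    exact ⟨hq, (insTop_mem_splitK_iff hq v).mp hK⟩
  · rintro ⟨hp, hK⟩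
    exact ⟨(insTop_mem_splitK_iff hp v).mpr hK, p, hp, by rw [insTop_self, Fin.val_last]⟩

/-- For `0 ≤ r ≤ n`, `|K_R(r, n+1)| = ((n+1) - r) · k(r, n)`. -/
theorem stmt6 (n r : ℕ) (hrn : r ≤ n) :
    (splitKR r (n + 1)).card = (n + 1 - r) * splitk r n := by
  have hcard : (Finset.Ici (⟨r, Nat.lt_succ_of_le hrn⟩ : Fin (n + 1)) ×ˢ splitK r n).card
      = (splitKR r (n + 1)).card := by
    refine Finset.card_bijective _ (insTop_bijective n) fun x => ?_
    rw [insTop_mem_splitKR_iff, Finset.mem_product, Finset.mem_Ici, Fin.le_def]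
  rw [← hcard, Finset.card_product, Fin.card_Ici, splitk]
end

section
/- For all real numbers x and y with |x| < 1 and |y| < 1, (1 − x − y + x·y) · ∑_{(r,s) ∈ ℕ×ℕ} k(r, r+s) · xʳ·yˢ/(r!·s!) = 1 + ∑_{(r,s) ∈ ℕ×ℕ} C(r+s, r) · x^{r+1}·y^{s+1}/((r+1)!·(s+1)!), where both sums are tsums over ℕ×ℕ and C(a,b) denotes the binomial coefficient. -/
/-!
Write `K(r, s)` for the set of permutations of `r + s` letters that avoid both split patterns with
respect to position `r`, and `k(r, s)` for its size.  The proof rests on the recurrence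
(`splitk_rec`)

`k(r+1, s+1) = (r+1) k(r, s+1) + (s+1) k(r+1, s) - (r+1)(s+1) k(r, s) + C(r+s, r)`.

A least value among the left positions takes part in no split pattern, so it may be deleted and
inserted freely (`card_minLeft`); by the reverse-complement symmetry, which exchanges the two
patterns, the same holds for a greatest value among the right positions.  The first three terms
are inclusion-exclusion over these two events.  In the remaining permutations the least value is on
the right and the greatest on the left; this forces both parts to be decreasing
(`mem_corner_iff`), so the permutation is given by its set of left values, which contains the
greatest value and not the least: there are `C(r+s, r)` choices (`card_corner`).

After division by `(r+1)! (s+1)!` the recurrence says that `(1 - x)(1 - y) 𝒦` and `1 + ℒ` have the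
same coefficients.  It also presents the coefficients of `𝒦` as partial sums of the convergent
double series `ℒ(1, 1)`, up to the constant `1`; they are therefore bounded, `𝒦` converges
absolutely for `|x|, |y| < 1`, and the index shifts are legitimate.
-/

open scoped Classical

/-- The value `0` (the least one) is at one of the first `r` positions. -/
def MinLeft (r n : ℕ) (w : Equiv.Perm (Fin n)) : Prop :=
  ∃ p : Fin n, (p : ℕ) < r ∧ (w p : ℕ) = 0

/-- The value `n - 1` (the greatest one) is at one of the last `n - r` positions. -/
def MaxRight (r n : ℕ) (w : Equiv.Perm (Fin n)) : Prop :=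
  ∃ p : Fin n, r ≤ (p : ℕ) ∧ (w p : ℕ) + 1 = n

lemma mem_splitK {r n : ℕ} {w : Equiv.Perm (Fin n)} :
    w ∈ splitK r n ↔ ¬ Contains312 n r w ∧ ¬ Contains231 n r w := by
  simp [splitK]

/-! ### Inserting a new least value -/

/-- The permutation obtained from `w` by raising all values by one and inserting the new least
value `0` at position `p`. -/
def insMin {n : ℕ} (p : Fin (n + 1)) (w : Equiv.Perm (Fin n)) : Equiv.Perm (Fin (n + 1)) :=
  (finSuccEquiv' p).trans ((Equiv.optionCongr w).trans (finSuccEquiv' 0).symm)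

@[simp] lemma insMin_self {n : ℕ} (p : Fin (n + 1)) (w : Equiv.Perm (Fin n)) :
    insMin p w p = 0 := by
  simp [insMin]

@[simp] lemma insMin_succAbove {n : ℕ} (p : Fin (n + 1)) (w : Equiv.Perm (Fin n)) (i : Fin n) :
    insMin p w (p.succAbove i) = (w i).succ := by
  simp [insMin]

lemma insMin_injective {n : ℕ} {p q : Fin (n + 1)} {w v : Equiv.Perm (Fin n)}
    (h : insMin p w = insMin q v) : p = q ∧ w = v := by
  have hpq : p = q := by
    apply (insMin q v).injective
    rw [insMin_self, ← h, insMin_self]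
  subst hpq
  refine ⟨rfl, Equiv.ext fun i => ?_⟩
  have := congrArg (fun f => f (p.succAbove i)) h
  simpa using this

lemma exists_insMin {n : ℕ} (w : Equiv.Perm (Fin (n + 1))) :
    ∃ v, w = insMin (w.symm 0) v := by
  have hbij : Function.Bijective
      (fun x : Fin (n + 1) × Equiv.Perm (Fin n) => insMin x.1 x.2) := by
    rw [Fintype.bijective_iff_injective_and_card]
    refine ⟨fun x y h => Prod.ext (insMin_injective h).1 (insMin_injective h).2, ?_⟩
    simp [Fintype.card_perm, Nat.factorial_succ]
  obtain ⟨⟨p, v⟩, rfl⟩ := hbij.2 w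
  refine ⟨v, ?_⟩
  have : (insMin p v).symm 0 = p := by rw [Equiv.symm_apply_eq, insMin_self]
  simp only [this]

lemma succAbove_lt_iff {n r : ℕ} {p : Fin (n + 1)} (hp : (p : ℕ) ≤ r) (i : Fin n) :
    (p.succAbove i : ℕ) < r + 1 ↔ (i : ℕ) < r := by
  rw [Fin.succAbove]
  split_ifs with h
  · simp only [Fin.lt_def, Fin.val_castSucc] at h ⊢
    omega
  · simp

lemma le_succAbove_iff {n r : ℕ} {p : Fin (n + 1)} (hp : (p : ℕ) ≤ r) (i : Fin n) :
    r + 1 ≤ (p.succAbove i : ℕ) ↔ r ≤ (i : ℕ) := by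
  have := succAbove_lt_iff hp i
  omega

/-- A least value at one of the first `r + 1` positions takes part in no split pattern: it can
play neither the `3` of `3|12` nor the `2` or `3` of `23|1`. -/
lemma insMin_mem_splitK {n r : ℕ} {p : Fin (n + 1)} (hp : (p : ℕ) ≤ r)
    (w : Equiv.Perm (Fin n)) :
    insMin p w ∈ splitK (r + 1) (n + 1) ↔ w ∈ splitK r n := by
  rw [mem_splitK, mem_splitK]
  have h1 : Contains312 (n + 1) (r + 1) (insMin p w) ↔ Contains312 n r w := by
    constructor
    · rintro ⟨i₁, i₂, i₃, h12, h23, h1, h2, hw, hw'⟩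
      have e1 : i₁ ≠ p := by rintro rfl; simp at hw'
      have e2 : i₂ ≠ p := by rintro rfl; omega
      have e3 : i₃ ≠ p := by
        rintro rfl
        simp at hw
      obtain ⟨j₁, rfl⟩ := Fin.exists_succAbove_eq e1
      obtain ⟨j₂, rfl⟩ := Fin.exists_succAbove_eq e2
      obtain ⟨j₃, rfl⟩ := Fin.exists_succAbove_eq e3
      simp only [insMin_succAbove, Fin.succ_lt_succ_iff, Fin.succAbove_lt_succAbove_iff,
        succAbove_lt_iff hp, le_succAbove_iff hp] at *
      exact ⟨j₁, j₂, j₃, h12, h23, h1, h2, hw, hw'⟩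
    · rintro ⟨i₁, i₂, i₃, h⟩
      refine ⟨p.succAbove i₁, p.succAbove i₂, p.succAbove i₃, ?_⟩
      simpa only [insMin_succAbove, Fin.succ_lt_succ_iff, Fin.succAbove_lt_succAbove_iff,
        succAbove_lt_iff hp, le_succAbove_iff hp] using h
  have h2 : Contains231 (n + 1) (r + 1) (insMin p w) ↔ Contains231 n r w := by
    constructor
    · rintro ⟨i₁, i₂, i₃, h12, h23, h1, h2, hw, hw'⟩
      have e1 : i₁ ≠ p := by rintro rfl; simp at hw
      have e2 : i₂ ≠ p := by rintro rfl; simp at hw'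
      have e3 : i₃ ≠ p := by rintro rfl; omega
      obtain ⟨j₁, rfl⟩ := Fin.exists_succAbove_eq e1
      obtain ⟨j₂, rfl⟩ := Fin.exists_succAbove_eq e2
      obtain ⟨j₃, rfl⟩ := Fin.exists_succAbove_eq e3
      simp only [insMin_succAbove, Fin.succ_lt_succ_iff, Fin.succAbove_lt_succAbove_iff,
        succAbove_lt_iff hp, le_succAbove_iff hp] at *
      exact ⟨j₁, j₂, j₃, h12, h23, h1, h2, hw, hw'⟩
    · rintro ⟨i₁, i₂, i₃, h⟩
      refine ⟨p.succAbove i₁, p.succAbove i₂, p.succAbove i₃, ?_⟩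
      simpa only [insMin_succAbove, Fin.succ_lt_succ_iff, Fin.succAbove_lt_succAbove_iff,
        succAbove_lt_iff hp, le_succAbove_iff hp] using h
  rw [h1, h2]

lemma maxRight_insMin {n r : ℕ} {p : Fin (n + 1)} (hp : (p : ℕ) ≤ r)
    (w : Equiv.Perm (Fin n)) :
    MaxRight (r + 1) (n + 1) (insMin p w) ↔ MaxRight r n w := by
  constructor
  · rintro ⟨i, h1, h2⟩
    have e : i ≠ p := by rintro rfl; omega
    obtain ⟨j, rfl⟩ := Fin.exists_succAbove_eq e
    rw [le_succAbove_iff hp] at h1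
    simp only [insMin_succAbove, Fin.val_succ] at h2
    exact ⟨j, h1, by omega⟩
  · rintro ⟨i, h1, h2⟩
    exact ⟨p.succAbove i, (le_succAbove_iff hp i).2 h1, by simp [h2]⟩

/-- Deleting a least value that sits among the first `r + 1` positions is `(r + 1)`-to-one,
also when restricted to a property `Q` that is insensitive to this deletion. -/
lemma card_minLeft {n r : ℕ} (hr : r ≤ n) (Q : Equiv.Perm (Fin (n + 1)) → Prop)
    (Q' : Equiv.Perm (Fin n) → Prop)
    (hQ : ∀ (p : Fin (n + 1)) w, (p : ℕ) ≤ r → (Q (insMin p w) ↔ Q' w)) :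
    ((splitK (r + 1) (n + 1)).filter fun w => MinLeft (r + 1) (n + 1) w ∧ Q w).card
      = (r + 1) * ((splitK r n).filter Q').card := by
  have hI : (Finset.Iic (⟨r, by omega⟩ : Fin (n + 1))).card = r + 1 := by simp
  conv_rhs => rw [← hI]
  rw [← Finset.card_product]
  symm
  refine Finset.card_bij (fun x _ => insMin x.1 x.2) ?_ ?_ ?_
  · rintro ⟨p, w⟩ h
    simp only [Finset.mem_product, Finset.mem_Iic, Finset.mem_filter, Fin.le_def] at h ⊢
    obtain ⟨hp, hw, hq⟩ := h
    exact ⟨(insMin_mem_splitK hp w).2 hw, ⟨p, by omega, by simp⟩, (hQ p w hp).2 hq⟩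
  · rintro x _ y _ h
    exact Prod.ext (insMin_injective h).1 (insMin_injective h).2
  · intro w h
    obtain ⟨v, hv⟩ := exists_insMin w
    simp only [Finset.mem_filter] at h
    obtain ⟨hw, ⟨p, hp, hp0⟩, hq⟩ := h
    have hp' : w.symm 0 = p := by
      rw [Equiv.symm_apply_eq]
      exact Fin.ext hp0.symm
    rw [hp'] at hv
    subst hv
    have hpr : (p : ℕ) ≤ r := by omega
    refine ⟨(p, v), ?_, rfl⟩
    simp only [Finset.mem_product, Finset.mem_Iic, Finset.mem_filter, Fin.le_def]
    exact ⟨hpr, (insMin_mem_splitK hpr v).1 hw, (hQ p v hpr).1 hq⟩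

/-! ### The reverse-complement symmetry -/

/-- The reverse-complement `i ↦ n - 1 - w (n - 1 - i)`. -/
def revComp {n : ℕ} (w : Equiv.Perm (Fin n)) : Equiv.Perm (Fin n) :=
  Fin.revPerm.trans (w.trans Fin.revPerm)

lemma revComp_apply {n : ℕ} (w : Equiv.Perm (Fin n)) (i : Fin n) :
    revComp w i = (w i.rev).rev := rfl

lemma revComp_revComp {n : ℕ} (w : Equiv.Perm (Fin n)) : revComp (revComp w) = w := by
  ext i; simp [revComp_apply]

lemma contains231_revComp {n r s : ℕ} (h : r + s = n) {w : Equiv.Perm (Fin n)}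
    (hw : Contains312 n r w) : Contains231 n s (revComp w) := by
  obtain ⟨i₁, i₂, i₃, h12, h23, h1, h2, hw, hw'⟩ := hw
  refine ⟨i₃.rev, i₂.rev, i₁.rev, ?_⟩
  simp only [revComp_apply, Fin.rev_rev, Fin.rev_lt_rev, Fin.val_rev]
  exact ⟨h23, h12, by omega, by omega, hw', hw⟩

lemma contains312_revComp {n r s : ℕ} (h : r + s = n) {w : Equiv.Perm (Fin n)}
    (hw : Contains231 n r w) : Contains312 n s (revComp w) := by
  obtain ⟨i₁, i₂, i₃, h12, h23, h1, h2, hw, hw'⟩ := hw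
  refine ⟨i₃.rev, i₂.rev, i₁.rev, ?_⟩
  simp only [revComp_apply, Fin.rev_rev, Fin.rev_lt_rev, Fin.val_rev]
  exact ⟨h23, h12, by omega, by omega, hw', hw⟩

lemma revComp_mem {n r s : ℕ} (h : r + s = n) {w : Equiv.Perm (Fin n)}
    (hw : w ∈ splitK r n) : revComp w ∈ splitK s n := by
  rw [mem_splitK] at *
  have h' : s + r = n := by omega
  refine ⟨fun hc => hw.2 ?_, fun hc => hw.1 ?_⟩
  · simpa only [revComp_revComp] using contains231_revComp h' hc
  · simpa only [revComp_revComp] using contains312_revComp h' hc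

lemma splitk_symm {n r s : ℕ} (h : r + s = n) : splitk r n = splitk s n :=
  Finset.card_bij' (fun w _ => revComp w) (fun w _ => revComp w)
    (fun _ hw => revComp_mem h hw) (fun _ hw => revComp_mem (by omega) hw)
    (fun w _ => revComp_revComp w) (fun w _ => revComp_revComp w)

lemma minLeft_revComp {n r s : ℕ} (h : r + s = n) {w : Equiv.Perm (Fin n)}
    (hw : MaxRight r n w) : MinLeft s n (revComp w) := by
  obtain ⟨p, hp, hp'⟩ := hw
  refine ⟨p.rev, ?_, ?_⟩
  · rw [Fin.val_rev]; omega
  · rw [revComp_apply, Fin.rev_rev, Fin.val_rev]; omega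

lemma maxRight_revComp {n r s : ℕ} (h : r + s = n) {w : Equiv.Perm (Fin n)}
    (hw : MinLeft r n w) : MaxRight s n (revComp w) := by
  obtain ⟨p, hp, hp'⟩ := hw
  have := p.isLt
  refine ⟨p.rev, ?_, ?_⟩
  · rw [Fin.val_rev]; omega
  · rw [revComp_apply, Fin.rev_rev, Fin.val_rev]; omega

lemma card_maxRight {n r s : ℕ} (h : r + s = n) :
    ((splitK r n).filter (MaxRight r n)).card = ((splitK s n).filter (MinLeft s n)).card := by
  refine Finset.card_bij' (fun w _ => revComp w) (fun w _ => revComp w) ?_ ?_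
    (fun w _ => revComp_revComp w) (fun w _ => revComp_revComp w)
  · intro w hw
    rw [Finset.mem_filter] at *
    exact ⟨revComp_mem h hw.1, minLeft_revComp h hw.2⟩
  · intro w hw
    rw [Finset.mem_filter] at *
    exact ⟨revComp_mem (by omega) hw.1, maxRight_revComp (by omega) hw.2⟩

/-! ### Least value on the right and greatest value on the left -/

/-- With the greatest value on the left and the least one on the right, avoiding the two split
patterns means that both parts of the one-line notation are decreasing. -/
lemma mem_corner_iff (r s : ℕ) (w : Equiv.Perm (Fin ((r + 1) + (s + 1)))) :
    (w ∈ splitK (r + 1) ((r + 1) + (s + 1)) ∧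
      ¬ MinLeft (r + 1) ((r + 1) + (s + 1)) w ∧ ¬ MaxRight (r + 1) ((r + 1) + (s + 1)) w) ↔
    StrictAnti (fun i => w (Fin.castAdd (s + 1) i)) ∧
      StrictAnti (fun i => w (Fin.natAdd (r + 1) i)) ∧
      (∃ i : Fin (r + 1), w (Fin.castAdd (s + 1) i) = Fin.last (r + 1 + s)) ∧
      (∃ j : Fin (s + 1), w (Fin.natAdd (r + 1) j) = ⟨0, by omega⟩) := by
  constructor
  · rintro ⟨hK, hm, hM⟩
    rw [mem_splitK] at hK
    have hA : ∃ i : Fin (r + 1), w (Fin.castAdd (s + 1) i) = Fin.last (r + 1 + s) := by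
      obtain ⟨p, hp⟩ := w.surjective (Fin.last (r + 1 + s))
      induction p using Fin.addCases with
      | left i => exact ⟨i, hp⟩
      | right j => exact absurd ⟨Fin.natAdd (r + 1) j, by simp, by rw [hp]; rfl⟩ hM
    have hB : ∃ j : Fin (s + 1), w (Fin.natAdd (r + 1) j) = ⟨0, by omega⟩ := by
      obtain ⟨p, hp⟩ := w.surjective ⟨0, by omega⟩
      induction p using Fin.addCases with
      | left i =>
        refine absurd ⟨Fin.castAdd (s + 1) i, ?_, by rw [hp]⟩ hm
        rw [Fin.val_castAdd]
        exact i.isLt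
      | right j => exact ⟨j, hp⟩
    refine ⟨?_, ?_, hA, hB⟩
    · intro a b hab
      obtain ⟨j, hj⟩ := hB
      by_contra hlt
      have hne : w (Fin.castAdd (s + 1) a) ≠ w (Fin.castAdd (s + 1) b) := fun h =>
        hab.ne (Fin.castAdd_injective _ _ (w.injective h))
      have hne0 : w (Fin.castAdd (s + 1) a) ≠ w (Fin.natAdd (r + 1) j) := fun h => by
        have := congrArg Fin.val (w.injective h)
        simp at this; omega
      refine hK.2 ⟨Fin.castAdd _ a, Fin.castAdd _ b, Fin.natAdd _ j, hab, ?_, ?_, ?_, ?_, ?_⟩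
      · simp only [Fin.lt_def, Fin.val_castAdd, Fin.val_natAdd]; omega
      · simp only [Fin.val_castAdd]; omega
      · simp
      · rw [hj] at hne0 ⊢
        exact lt_of_le_of_ne (Fin.mk_le_of_le_val (Nat.zero_le _)) hne0.symm
      · exact lt_of_le_of_ne (not_lt.1 hlt) hne
    · intro a b hab
      obtain ⟨i, hi⟩ := hA
      by_contra hlt
      have hne : w (Fin.natAdd (r + 1) a) ≠ w (Fin.natAdd (r + 1) b) := fun h =>
        hab.ne (Fin.natAdd_injective _ _ (w.injective h))
      have hne0 : w (Fin.natAdd (r + 1) b) ≠ w (Fin.castAdd (s + 1) i) := fun h => by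
        have := congrArg Fin.val (w.injective h)
        simp at this; omega
      refine hK.1 ⟨Fin.castAdd _ i, Fin.natAdd _ a, Fin.natAdd _ b, ?_, ?_, ?_, ?_, ?_, ?_⟩
      · simp only [Fin.lt_def, Fin.val_castAdd, Fin.val_natAdd]; omega
      · simpa using hab
      · simp only [Fin.val_castAdd]; omega
      · simp
      · exact lt_of_le_of_ne (not_lt.1 hlt) hne
      · rw [hi] at hne0 ⊢
        exact lt_of_le_of_ne (Fin.le_last _) hne0
  · rintro ⟨hL, hR, ⟨i, hi⟩, ⟨j, hj⟩⟩
    refine ⟨mem_splitK.2 ⟨?_, ?_⟩, ?_, ?_⟩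
    · rintro ⟨i₁, i₂, i₃, h12, h23, h1, h2, hw, -⟩
      induction i₂ using Fin.addCases with
      | left a => simp at h2; omega
      | right a =>
        induction i₃ using Fin.addCases with
        | left b => simp [Fin.lt_def] at h23; omega
        | right b => exact lt_asymm hw (hR (by simpa using h23))
    · rintro ⟨i₁, i₂, i₃, h12, h23, h1, h2, -, hw⟩
      induction i₂ using Fin.addCases with
      | right a => simp at h1; omega
      | left a =>
        induction i₁ using Fin.addCases with
        | right b => simp [Fin.lt_def] at h12; omega
        | left b => exact lt_asymm hw (hL (a := b) (b := a) h12)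
    · rintro ⟨p, hp, hp0⟩
      have : p = Fin.natAdd (r + 1) j := w.injective (by rw [hj]; exact Fin.ext hp0)
      subst this
      simp at hp; omega
    · rintro ⟨p, hp, hp0⟩
      have : p = Fin.castAdd (s + 1) i := w.injective (by
        rw [hi]; apply Fin.ext; simp; omega)
      subst this
      simp at hp; omega

/-- The set of values at the first `m` positions. -/
noncomputable def leftVals {m k : ℕ} (w : Equiv.Perm (Fin (m + k))) : Finset (Fin (m + k)) :=
  Finset.univ.image fun i => w (Fin.castAdd k i)

lemma mem_leftVals {m k : ℕ} {w : Equiv.Perm (Fin (m + k))} {v : Fin (m + k)} :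
    v ∈ leftVals w ↔ ∃ i : Fin m, w (Fin.castAdd k i) = v := by
  simp [leftVals]

lemma not_mem_leftVals {m k : ℕ} {w : Equiv.Perm (Fin (m + k))} {v : Fin (m + k)} :
    v ∉ leftVals w ↔ ∃ j : Fin k, w (Fin.natAdd m j) = v := by
  rw [mem_leftVals]
  constructor
  · intro h
    obtain ⟨p, hp⟩ := w.surjective v
    induction p using Fin.addCases with
    | left i => exact absurd ⟨i, hp⟩ h
    | right j => exact ⟨j, hp⟩
  · rintro ⟨j, rfl⟩ ⟨i, hi⟩
    have := congrArg Fin.val (w.injective hi)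
    simp at this; omega

lemma card_leftVals {m k : ℕ} (w : Equiv.Perm (Fin (m + k))) : (leftVals w).card = m := by
  rw [leftVals, Finset.card_image_of_injective _
    (fun _ _ h => Fin.castAdd_injective m k (w.injective h)), Finset.card_univ, Fintype.card_fin]

/-- A permutation that is decreasing on both parts is determined by its values on the left. -/
lemma leftVals_inj {m k : ℕ} {w v : Equiv.Perm (Fin (m + k))}
    (hw : StrictAnti (fun i => w (Fin.castAdd k i))) (hw' : StrictAnti (fun i => w (Fin.natAdd m i)))
    (hv : StrictAnti (fun i => v (Fin.castAdd k i))) (hv' : StrictAnti (fun i => v (Fin.natAdd m i)))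
    (h : leftVals w = leftVals v) : w = v := by
  have h1 := (hw.range_inj hv).1 (by
    ext x
    have := congrArg (x ∈ ·) h
    simpa [mem_leftVals] using this)
  have h2 := (hw'.range_inj hv').1 (by
    ext x
    have := congrArg (x ∉ ·) h
    simpa only [not_mem_leftVals, Set.mem_range, eq_iff_iff] using this)
  ext p
  induction p using Fin.addCases with
  | left i => exact congrArg Fin.val (congrFun h1 i)
  | right i => exact congrArg Fin.val (congrFun h2 i)

/-- Every set of the right size is the set of left values of a permutation that is decreasing on
both parts. -/
lemma exists_leftVals {m k : ℕ} (A : Finset (Fin (m + k))) (hA : A.card = m) :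
    ∃ w : Equiv.Perm (Fin (m + k)), StrictAnti (fun i => w (Fin.castAdd k i)) ∧
      StrictAnti (fun i => w (Fin.natAdd m i)) ∧ leftVals w = A := by
  have hA' : Aᶜ.card = k := by rw [Finset.card_compl, hA]; simp
  refine ⟨finSumFinEquiv.symm.trans
    ((Equiv.sumCongr Fin.revPerm Fin.revPerm).trans (finSumEquivOfFinset hA hA')), ?_, ?_, ?_⟩
  · intro a b hab
    simpa using hab
  · intro a b hab
    simpa using hab
  · apply Finset.eq_of_subset_of_card_le
    · intro x hx
      obtain ⟨i, rfl⟩ := mem_leftVals.1 hx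
      simp
    · rw [card_leftVals, hA]

/-- Such a permutation is given by its left values other than the greatest one, an arbitrary
`r`-element set of values different from the two extreme ones. -/
lemma card_corner (r s : ℕ) :
    ((splitK (r + 1) ((r + 1) + (s + 1))).filter fun w =>
      ¬ MinLeft (r + 1) ((r + 1) + (s + 1)) w ∧ ¬ MaxRight (r + 1) ((r + 1) + (s + 1)) w).card
      = (r + s).choose r := by
  have hlast : (Fin.last (r + 1 + s) : Fin ((r + 1) + (s + 1))) ≠ ⟨0, by omega⟩ := by
    intro h
    have := congrArg Fin.val h
    simp at this
  have hT : (((Finset.univ : Finset (Fin ((r + 1) + (s + 1)))).erase ⟨0, by omega⟩).erase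
      (Fin.last (r + 1 + s))).card = r + s := by
    rw [Finset.card_erase_of_mem (by simp), Finset.card_erase_of_mem (by simp)]
    simp
  conv_rhs => rw [← hT]
  rw [← Finset.card_powersetCard]
  refine Finset.card_bij (fun w _ => (leftVals w).erase (Fin.last (r + 1 + s))) ?_ ?_ ?_
  · intro w hw
    rw [Finset.mem_filter, mem_corner_iff] at hw
    obtain ⟨-, -, hA, hB⟩ := hw
    rw [← mem_leftVals] at hA
    rw [← not_mem_leftVals] at hB
    rw [Finset.mem_powersetCard]
    constructor
    · intro x hx
      rw [Finset.mem_erase] at hx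
      simp only [Finset.mem_erase, Finset.mem_univ, and_true]
      exact ⟨hx.1, fun h => hB (h ▸ hx.2)⟩
    · rw [Finset.card_erase_of_mem hA, card_leftVals]; rfl
  · intro w hw v hv h
    rw [Finset.mem_filter, mem_corner_iff] at hw hv
    obtain ⟨h1, h2, hA, -⟩ := hw
    obtain ⟨h1', h2', hA', -⟩ := hv
    rw [← mem_leftVals] at hA hA'
    refine leftVals_inj h1 h2 h1' h2' ?_
    rw [← Finset.insert_erase hA, ← Finset.insert_erase hA', h]
  · intro B hB
    rw [Finset.mem_powersetCard] at hB
    have hBl : Fin.last (r + 1 + s) ∉ B := fun h => by simpa using hB.1 h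
    have hB0 : (⟨0, by omega⟩ : Fin ((r + 1) + (s + 1))) ∉ B := fun h => by simpa using hB.1 h
    obtain ⟨w, h1, h2, h3⟩ := exists_leftVals (m := r + 1) (k := s + 1)
      (insert (Fin.last (r + 1 + s)) B) (by rw [Finset.card_insert_of_notMem hBl, hB.2])
    refine ⟨w, ?_, ?_⟩
    · rw [Finset.mem_filter, mem_corner_iff, ← mem_leftVals, ← not_mem_leftVals, h3]
      refine ⟨h1, h2, Finset.mem_insert_self _ _, ?_⟩
      rw [Finset.mem_insert, not_or]
      exact ⟨hlast.symm, hB0⟩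
    · simp only [h3]
      exact Finset.erase_insert hBl

/-! ### The recurrence -/

lemma card_minLeft_all {n r : ℕ} (hr : r ≤ n) :
    ((splitK (r + 1) (n + 1)).filter (MinLeft (r + 1) (n + 1))).card = (r + 1) * splitk r n := by
  have := card_minLeft hr (fun _ => True) (fun _ => True) (fun _ _ _ => Iff.rfl)
  simpa [splitk] using this

/-- Inclusion-exclusion over the events "least value on the left" and "greatest value on the
right". -/
lemma splitk_rec (r s : ℕ) :
    splitk (r + 1) ((r + 1) + (s + 1)) + (r + 1) * ((s + 1) * splitk r (r + s)) =
      (r + 1) * splitk r (r + (s + 1)) + (s + 1) * splitk (r + 1) ((r + 1) + s) +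
        (r + s).choose r := by
  have e1 : r + (s + 1) = r + 1 + s := by omega
  have hmin := card_minLeft_all (n := r + 1 + s) (r := r) (by omega)
  have hmax := card_maxRight (r := r + 1) (s := s + 1) rfl
  have hmax' := card_minLeft_all (n := r + 1 + s) (r := s) (by omega)
  have hsym := splitk_symm (n := r + 1 + s) (r := r + 1) (s := s) rfl
  have hboth := card_minLeft (n := r + 1 + s) (r := r) (by omega)
    (MaxRight (r + 1) (r + 1 + s + 1)) (MaxRight r (r + 1 + s))
    (fun p w hp => maxRight_insMin hp w)
  have hmax2 := card_maxRight (n := r + 1 + s) (r := r) (s := s + 1) (by omega)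
  have hmax2' := card_minLeft_all (n := r + s) (r := s) (by omega)
  rw [show r + s + 1 = r + 1 + s by omega] at hmax2'
  have hsym2 := splitk_symm (n := r + s) (r := r) (s := s) rfl
  have hcorner := card_corner r s
  rw [hmax2, hmax2', ← hsym2] at hboth
  change ((splitK (r + 1) (r + 1 + s + 1)).filter (MaxRight (r + 1) (r + 1 + s + 1))).card =
    ((splitK (s + 1) (r + 1 + s + 1)).filter (MinLeft (s + 1) (r + 1 + s + 1))).card at hmax
  rw [hmax', ← hsym] at hmax
  rw [e1, ← hmin, ← hmax, ← hboth, ← hcorner, splitk]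
  change (splitK (r + 1) (r + 1 + s + 1)).card + _ = _ + _ + ((splitK (r + 1) (r + 1 + s + 1)).filter
    fun w => ¬ MinLeft (r + 1) (r + 1 + s + 1) w ∧ ¬ MaxRight (r + 1) (r + 1 + s + 1) w).card
  generalize splitK (r + 1) (r + 1 + s + 1) = K
  have hor := Finset.card_union_add_card_inter (K.filter (MinLeft (r + 1) (r + 1 + s + 1)))
    (K.filter (MaxRight (r + 1) (r + 1 + s + 1)))
  rw [← Finset.filter_or, ← Finset.filter_and] at hor
  have hnot := Finset.card_filter_add_card_filter_not (s := K)
    (fun w => MinLeft (r + 1) (r + 1 + s + 1) w ∨ MaxRight (r + 1) (r + 1 + s + 1) w)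
  simp only [not_or] at hnot
  omega

lemma splitk_zero (n : ℕ) : splitk 0 n = n.factorial := by
  rw [splitk, splitK, Finset.filter_true_of_mem, Finset.card_univ, Fintype.card_perm,
    Fintype.card_fin]
  intro w _
  constructor
  · rintro ⟨i₁, i₂, i₃, h12, h23, h1, h2, hw, hw'⟩; omega
  · rintro ⟨i₁, i₂, i₃, h12, h23, h1, h2, hw, hw'⟩; omega

lemma splitk_self (n : ℕ) : splitk n n = n.factorial := by
  rw [splitk_symm (s := 0) (by omega), splitk_zero]

/-! ### Generating functions -/

/-- The coefficients of `𝒦`. -/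
noncomputable def coefK (r s : ℕ) : ℝ :=
  (splitk r (r + s) : ℝ) / ((Nat.factorial r : ℝ) * (Nat.factorial s : ℝ))

/-- The coefficient of `x ^ (r + 1) * y ^ (s + 1)` in `ℒ`. -/
noncomputable def coefL (r s : ℕ) : ℝ :=
  (Nat.choose (r + s) r : ℝ) / ((Nat.factorial (r + 1) : ℝ) * (Nat.factorial (s + 1) : ℝ))

lemma coefK_zero_left (s : ℕ) : coefK 0 s = 1 := by
  have : (s.factorial : ℝ) ≠ 0 := by positivity
  simp [coefK, splitk_zero, this]

lemma coefK_zero_right (r : ℕ) : coefK r 0 = 1 := by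
  have : (r.factorial : ℝ) ≠ 0 := by positivity
  simp [coefK, splitk_self, this]

lemma coefK_rec (r s : ℕ) :
    coefK (r + 1) (s + 1) - coefK r (s + 1) - coefK (r + 1) s + coefK r s = coefL r s := by
  have h : (splitk (r + 1) ((r + 1) + (s + 1)) : ℝ) + (r + 1) * ((s + 1) * splitk r (r + s)) =
      (r + 1) * splitk r (r + (s + 1)) + (s + 1) * splitk (r + 1) ((r + 1) + s) +
        (r + s).choose r := by
    exact_mod_cast splitk_rec r s
  have hr : (r.factorial : ℝ) ≠ 0 := by positivity
  have hs : (s.factorial : ℝ) ≠ 0 := by positivity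
  have hr' : (r + 1 : ℝ) ≠ 0 := by positivity
  have hs' : (s + 1 : ℝ) ≠ 0 := by positivity
  simp only [coefK, coefL, Nat.factorial_succ, Nat.cast_mul, Nat.cast_succ]
  field_simp
  linarith

lemma coefL_nonneg (r s : ℕ) : 0 ≤ coefL r s := by unfold coefL; positivity

lemma coefK_nonneg (r s : ℕ) : 0 ≤ coefK r s := by unfold coefK; positivity

lemma coefL_le (r s : ℕ) : coefL r s ≤ (2 ^ r / r.factorial) * (2 ^ s / s.factorial) := by
  have h1 : ((r + s).choose r : ℝ) ≤ 2 ^ r * 2 ^ s := by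
    rw [← pow_add]; exact_mod_cast Nat.choose_le_two_pow _ _
  have h2 : (r.factorial : ℝ) ≤ (r + 1).factorial := by
    exact_mod_cast Nat.factorial_le (Nat.le_succ r)
  have h3 : (s.factorial : ℝ) ≤ (s + 1).factorial := by
    exact_mod_cast Nat.factorial_le (Nat.le_succ s)
  rw [coefL, div_mul_div_comm]
  gcongr

lemma summable_coefL : Summable fun p : ℕ × ℕ => coefL p.1 p.2 := by
  have h := Real.summable_pow_div_factorial 2
  refine Summable.of_nonneg_of_le (fun p => coefL_nonneg _ _) (fun p => coefL_le _ _) ?_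
  exact h.mul_of_nonneg h (fun _ => by positivity) (fun _ => by positivity)

/-- The recurrence telescopes: the coefficients of `𝒦` are one plus rectangular partial sums of
`coefL`, hence bounded. -/
lemma coefK_eq (r s : ℕ) :
    coefK r s = 1 + ∑ p ∈ Finset.range r ×ˢ Finset.range s, coefL p.1 p.2 := by
  rw [Finset.sum_product]
  induction r generalizing s with
  | zero => simp [coefK_zero_left]
  | succ r ih =>
    induction s with
    | zero => simp [coefK_zero_right]
    | succ s ihs =>
      have h := coefK_rec r s
      have h1 := ih s
      have h2 := ih (s + 1)
      rw [Finset.sum_range_succ, Finset.sum_range_succ _ s] at *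
      linarith

lemma coefK_le (r s : ℕ) : coefK r s ≤ 1 + ∑' p : ℕ × ℕ, coefL p.1 p.2 := by
  rw [coefK_eq]
  gcongr
  exact summable_coefL.sum_le_tsum _ (fun p _ => coefL_nonneg _ _)

lemma summable_coefK {x y : ℝ} (hx : |x| < 1) (hy : |y| < 1) :
    Summable fun p : ℕ × ℕ => coefK p.1 p.2 * (x ^ p.1 * y ^ p.2) := by
  have hg := (summable_geometric_of_lt_one (abs_nonneg x) hx).mul_of_nonneg
    (summable_geometric_of_lt_one (abs_nonneg y) hy)
    (fun _ => by positivity) (fun _ => by positivity)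
  refine Summable.of_norm_bounded (hg.mul_left (1 + ∑' p : ℕ × ℕ, coefL p.1 p.2)) fun p => ?_
  rw [Real.norm_eq_abs, abs_mul, abs_mul, abs_pow, abs_pow, abs_of_nonneg (coefK_nonneg _ _)]
  exact mul_le_mul_of_nonneg_right (coefK_le _ _) (by positivity)

/-- Splitting off the first row of a double series. -/
lemma tsum_row {f : ℕ × ℕ → ℝ} (hf : Summable f) :
    ∑' p, f p = ∑' s, f (0, s) + ∑' p : ℕ × ℕ, f (p.1 + 1, p.2) := by
  have hf' : Summable fun p : ℕ × ℕ => f (p.1 + 1, p.2) :=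
    hf.comp_injective (i := fun p : ℕ × ℕ => (p.1 + 1, p.2)) (by
      rintro ⟨a, b⟩ ⟨c, d⟩ h; simpa using h)
  rw [hf.tsum_prod, hf.prod.tsum_eq_zero_add, hf'.tsum_prod]

lemma tsum_col {f : ℕ × ℕ → ℝ} (hf : Summable f) :
    ∑' p, f p = ∑' r, f (r, 0) + ∑' p : ℕ × ℕ, f (p.1, p.2 + 1) := by
  have h := tsum_row (f := f ∘ Prod.swap) (hf.comp_injective Prod.swap_injective)
  rw [← (Equiv.prodComm ℕ ℕ).tsum_eq f, ← (Equiv.prodComm ℕ ℕ).tsum_eq fun p => f (p.1, p.2 + 1)]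
  exact h

/-- Theorem 1.3 (generating function form): for `|x| < 1`, `|y| < 1`,
`(1-x-y+xy)·𝒦(x,y) = 1 + ℒ(x,y)`, where `𝒦(x,y) = ∑ k(r,r+s) xʳyˢ/(r!·s!)` and
`ℒ(x,y) = ∑ C(r+s, r) x^{r+1}y^{s+1}/((r+1)!·(s+1)!)`. -/
theorem stmt16 (x y : ℝ) (hx : |x| < 1) (hy : |y| < 1) :
    (1 - x - y + x * y) *
        ∑' p : ℕ × ℕ, (splitk p.1 (p.1 + p.2) : ℝ) * x ^ p.1 * y ^ p.2 /
          ((Nat.factorial p.1 : ℝ) * (Nat.factorial p.2 : ℝ)) =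
      1 + ∑' p : ℕ × ℕ, (Nat.choose (p.1 + p.2) p.1 : ℝ) * x ^ (p.1 + 1) * y ^ (p.2 + 1) /
        ((Nat.factorial (p.1 + 1) : ℝ) * (Nat.factorial (p.2 + 1) : ℝ)) := by

  have hsum := summable_coefK hx hy
  set f : ℕ × ℕ → ℝ := fun p => coefK p.1 p.2 * (x ^ p.1 * y ^ p.2) with hf
  have hK : ∀ p : ℕ × ℕ, (splitk p.1 (p.1 + p.2) : ℝ) * x ^ p.1 * y ^ p.2 /
      ((Nat.factorial p.1 : ℝ) * (Nat.factorial p.2 : ℝ)) = f p := fun p => by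
    simp only [hf, coefK]; ring
  simp only [hK]
  have s10 : Summable fun p : ℕ × ℕ => f (p.1 + 1, p.2) :=
    hsum.comp_injective (i := fun p : ℕ × ℕ => (p.1 + 1, p.2)) (by
      rintro ⟨a, b⟩ ⟨c, d⟩ h; simpa using h)
  have s01 : Summable fun p : ℕ × ℕ => f (p.1, p.2 + 1) :=
    hsum.comp_injective (i := fun p : ℕ × ℕ => (p.1, p.2 + 1)) (by
      rintro ⟨a, b⟩ ⟨c, d⟩ h; simpa using h)
  have s11 : Summable fun p : ℕ × ℕ => f (p.1 + 1, p.2 + 1) :=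
    hsum.comp_injective (i := fun p : ℕ × ℕ => (p.1 + 1, p.2 + 1)) (by
      rintro ⟨a, b⟩ ⟨c, d⟩ h; simpa using h)
  have f0s : ∀ s, f (0, s) = y ^ s := fun s => by simp [hf, coefK_zero_left]
  have fr0 : ∀ r, f (r, 0) = x ^ r := fun r => by simp [hf, coefK_zero_right]
  have gx : Summable fun r : ℕ => x ^ r := summable_geometric_of_abs_lt_one hx
  have hrow := tsum_row hsum
  have hcol := tsum_col hsum
  have hrow' := tsum_col s10
  simp only [f0s, fr0] at hrow hcol hrow'
  have hx0 := gx.tsum_eq_zero_add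
  rw [pow_zero] at hx0
  have hxg : (1 - x) * ∑' r : ℕ, x ^ r = 1 := by
    rw [tsum_geometric_of_abs_lt_one hx]
    exact mul_inv_cancel₀ (by linarith [(abs_lt.1 hx).2])
  have hyg : (1 - y) * ∑' r : ℕ, y ^ r = 1 := by
    rw [tsum_geometric_of_abs_lt_one hy]
    exact mul_inv_cancel₀ (by linarith [(abs_lt.1 hy).2])
  -- The recurrence, summed over all coefficients.
  have hL : ∑' p : ℕ × ℕ, (Nat.choose (p.1 + p.2) p.1 : ℝ) * x ^ (p.1 + 1) * y ^ (p.2 + 1) /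
        ((Nat.factorial (p.1 + 1) : ℝ) * (Nat.factorial (p.2 + 1) : ℝ)) =
      ∑' p : ℕ × ℕ, f (p.1 + 1, p.2 + 1) - x * ∑' p : ℕ × ℕ, f (p.1, p.2 + 1)
        - y * ∑' p : ℕ × ℕ, f (p.1 + 1, p.2) + x * y * ∑' p, f p := by
    rw [← tsum_mul_left, ← tsum_mul_left, ← tsum_mul_left,
      ← s11.tsum_sub (s01.mul_left x), ← (s11.sub (s01.mul_left x)).tsum_sub (s10.mul_left y),
      ← ((s11.sub (s01.mul_left x)).sub (s10.mul_left y)).tsum_add (hsum.mul_left (x * y))]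
    refine tsum_congr fun p => ?_
    have h := coefK_rec p.1 p.2
    have e : (Nat.choose (p.1 + p.2) p.1 : ℝ) * x ^ (p.1 + 1) * y ^ (p.2 + 1) /
        ((Nat.factorial (p.1 + 1) : ℝ) * (Nat.factorial (p.2 + 1) : ℝ)) =
        coefL p.1 p.2 * (x ^ (p.1 + 1) * y ^ (p.2 + 1)) := by rw [coefL]; ring
    rw [e, ← h]
    simp only [hf]
    ring
  -- The border series `∑ x ^ r` and `∑ y ^ s` lost in the index shifts contribute the constant `1`.
  rw [hL]
  linear_combination (1 - y) * hrow - x * hcol + hrow' - hx0 + hxg + hyg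
end
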